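/- One has 1.7117 < V(π/2)/π² < 1.7118, where V(R) = 2π ∫₀^{π/2} X(R, θ)² · (∂Z/∂θ)(R, θ) dθ. (The paper computes V(π/2)/(2·(π/2))² ≈ 1.71179510, the minimum on [π/2, π] of the density lower-bound function f(R) = V(R)/(2R)².) -/

import Mathlib

/-!
Put `x = r sin θ` and `w = r²`. The half-angle formula gives
`X² = 2 w cos² θ · h` with `h = (1 - cos x) / x²`, and differentiating `Z` gives
`∂Z/∂θ = r cos θ · D` with
`D = (1 + cos x) / 2 + w (sin x / x³ - (1 + cos x) / (2 x²))`; both `h` and `D` are entire in `x`.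
After the substitution `s = sin θ` the volume is `4 π r³ ∫₀¹ (1 - s²) h D ds`, an integral without
square roots, and for `r = π / 2` dividing by `π²` leaves `2 w ∫₀¹ (1 - s²) h D ds`.

The alternating Taylor bounds for `sin` and `cos` (`taylor_bounds`) enclose `h` and `D` between
polynomials in `x² = w s²` (`factor_bounds`), all of which are nonnegative in the range needed.
The enclosing integrands have explicit polynomial antiderivatives `lowerPrim`, `upperPrim`
(`integrand_bounds`, `integral_primitive`), so the claim becomes two polynomial inequalities
in `w = π² / 4`, which follow from the known decimals of `π`. The true value is `1.711796…`, so the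
upper bound has a margin of only `4 · 10⁻⁶`; this dictates the Taylor orders.
-/

open Real

/-- The radial profile function `X(r, θ)` of the Nil geodesic sphere of radius `r`
(in the projective model, after the quadratic mapping). -/
noncomputable def nilX (r θ : ℝ) : ℝ :=
  if θ = 0 then r else (2 * cos θ / sin θ) * sin (r * sin θ / 2)

/-- The height profile function `Z(r, θ)` of the Nil geodesic sphere of radius `r`
(in the projective model, after the quadratic mapping). -/
noncomputable def nilZ (r θ : ℝ) : ℝ :=
  if θ = 0 then 0 else
    r * sin θ + r * cos θ ^ 2 / (2 * sin θ) -
      (cos θ ^ 2 / (2 * sin θ ^ 2)) * sin (r * sin θ)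

/-- The volume of the Nil geodesic ball of radius `R`. -/
noncomputable def nilBallVol (R : ℝ) : ℝ :=
  2 * π * ∫ θ in (0 : ℝ)..(π / 2), nilX R θ ^ 2 * deriv (fun t => nilZ R t) θ

/-! ### Alternating Taylor bounds for sine and cosine -/

open Finset in
/-- The Taylor polynomials with `n + 1` terms are upper bounds for `cos` and `sin` on `[0, ∞)` if `n`
is even and lower bounds if `n` is odd. Each bound is the integral of the preceding one. -/
lemma taylor_bounds (n : ℕ) : ∀ x : ℝ, 0 ≤ x →
    0 ≤ (-1) ^ (n + 1) * (cos x - ∑ i ∈ range (n + 1), (-1) ^ i * x ^ (2 * i) / (2 * i).factorial) ∧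
    0 ≤ (-1) ^ (n + 1) *
      (sin x - ∑ i ∈ range (n + 1), (-1) ^ i * x ^ (2 * i + 1) / (2 * i + 1).factorial) := by
  have nonneg_of_deriv (f f' : ℝ → ℝ) (hf : ∀ x, HasDerivAt f (f' x) x) (h0 : f 0 = 0)
      (h' : ∀ x, 0 ≤ x → 0 ≤ f' x) (x : ℝ) (hx : 0 ≤ x) : 0 ≤ f x := by
    have hm : MonotoneOn f (Set.Ici 0) := by
      apply monotoneOn_of_deriv_nonneg (convex_Ici 0)
      · exact fun y _ => (hf y).continuousAt.continuousWithinAt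
      · exact fun y _ => (hf y).differentiableAt.differentiableWithinAt
      · intro y hy
        rw [interior_Ici] at hy
        rw [(hf y).deriv]
        exact h' y (le_of_lt hy)
    simpa [h0] using hm (Set.mem_Ici.2 le_rfl) (Set.mem_Ici.2 hx) hx
  have deriv_sin_sum (m : ℕ) (x : ℝ) : HasDerivAt
      (fun x : ℝ => ∑ i ∈ range m, (-1 : ℝ) ^ i * x ^ (2 * i + 1) / (2 * i + 1).factorial)
      (∑ i ∈ range m, (-1 : ℝ) ^ i * x ^ (2 * i) / (2 * i).factorial) x := by
    refine HasDerivAt.fun_sum fun i _ => ?_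
    refine (((hasDerivAt_pow (2 * i + 1) x).const_mul ((-1 : ℝ) ^ i)).div_const _).congr_deriv ?_
    have : ((2 * i).factorial : ℝ) ≠ 0 := by positivity
    rw [Nat.factorial_succ]
    push_cast
    field_simp
  have deriv_cos_sum (m : ℕ) (x : ℝ) : HasDerivAt
      (fun x : ℝ => ∑ i ∈ range (m + 1), (-1 : ℝ) ^ i * x ^ (2 * i) / (2 * i).factorial)
      (-∑ i ∈ range m, (-1 : ℝ) ^ i * x ^ (2 * i + 1) / (2 * i + 1).factorial) x := by
    simp only [sum_range_succ']
    rw [← sum_neg_distrib]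
    simp only [mul_zero, pow_zero]
    refine (HasDerivAt.fun_sum fun i _ => ?_).add_const _
    refine (((hasDerivAt_pow (2 * (i + 1)) x).const_mul
      ((-1 : ℝ) ^ (i + 1))).div_const _).congr_deriv ?_
    have : ((2 * i + 1).factorial : ℝ) ≠ 0 := by positivity
    rw [show 2 * (i + 1) = (2 * i + 1) + 1 by ring, Nat.factorial_succ (2 * i + 1)]
    push_cast
    field_simp
    ring
  induction n with
  | zero =>
    intro x hx
    have h1 := cos_le_one x
    have h2 := sin_le hx
    constructor <;> simp <;> linarith
  | succ n ih =>
    have hc : ∀ x : ℝ, 0 ≤ x → 0 ≤ (-1) ^ (n + 2) *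
        (cos x - ∑ i ∈ range (n + 2), (-1) ^ i * x ^ (2 * i) / (2 * i).factorial) := by
      refine nonneg_of_deriv _ _
        (fun x => ((hasDerivAt_cos x).sub (deriv_cos_sum (n + 1) x)).const_mul _) ?_ ?_
      · simp [sum_range_succ']
      · intro x hx
        have := (ih x hx).2
        rw [pow_succ]
        linarith
    have hs : ∀ x : ℝ, 0 ≤ x → 0 ≤ (-1) ^ (n + 2) *
        (sin x - ∑ i ∈ range (n + 2), (-1) ^ i * x ^ (2 * i + 1) / (2 * i + 1).factorial) := by
      refine nonneg_of_deriv _ _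
        (fun x => ((hasDerivAt_sin x).sub (deriv_sin_sum (n + 2) x)).const_mul _) ?_ ?_
      · simp
      · exact hc
    exact fun x hx => ⟨hc x hx, hs x hx⟩

/-! ### Polynomial bounds for the factors of the integrand -/

/-- Lower bound for `(1 - cos x) / x²`, as a polynomial in `y = x²`. -/
noncomputable def hLo (y : ℝ) : ℝ := 1 / 2 - y / 24 + y ^ 2 / 720 - y ^ 3 / 40320

/-- Upper bound for `(1 - cos x) / x²`, as a polynomial in `y = x²`. -/
noncomputable def hHi (y : ℝ) : ℝ := 1 / 2 - y / 24 + y ^ 2 / 720 - y ^ 3 / 40320 + y ^ 4 / 3628800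

/-- The factor `(∂Z/∂θ) / (r cos θ)` of the height derivative, in terms of `w = r²` and
`x = r sin θ`. -/
noncomputable def dFac (w x : ℝ) : ℝ :=
  (1 + cos x) / 2 + w * (sin x / x ^ 3 - (1 + cos x) / (2 * x ^ 2))

/-- Lower bound for `dFac w x`, as a polynomial in `w` and `y = x²`. -/
noncomputable def dLo (w y : ℝ) : ℝ :=
  (1 - y / 4 + y ^ 2 / 48 - y ^ 3 / 1440) +
    w * (1 / 12 - y / 80 + y ^ 2 / 2016 - y ^ 3 / 80640)

/-- Upper bound for `dFac w x`, as a polynomial in `w` and `y = x²`. -/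
noncomputable def dHi (w y : ℝ) : ℝ :=
  (1 - y / 4 + y ^ 2 / 48 - y ^ 3 / 1440 + y ^ 4 / 80640) +
    w * (1 / 12 - y / 80 + y ^ 2 / 2016 - y ^ 3 / 103680 + y ^ 4 / 7257600)

/-! ### Antiderivatives of the polynomial bounds -/

/-- Antiderivative in `s`, vanishing at `0`, of `(1 - s²) · hLo(w s²) · dLo(w, w s²)`. -/
noncomputable def lowerPrim (w s : ℝ) : ℝ :=
    (1/2 + 1/24 * w) * s ^ 1 +
    (-1/6 - 5/72 * w - 7/2160 * w ^ 2) * s ^ 3 +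
    (1/30 * w + 23/3600 * w ^ 2 + 107/604800 * w ^ 3) * s ^ 5 +
    (-1/315 * w ^ 2 - 299/846720 * w ^ 3 - 1/151200 * w ^ 4) * s ^ 7 +
    (1/5670 * w ^ 3 + 89/7257600 * w ^ 4 + 11/65318400 * w ^ 5) * s ^ 9 +
    (-31/5322240 * w ^ 4 - 29/106444800 * w ^ 5 - 1/372556800 * w ^ 6) * s ^ 11 +
    (43/377395200 * w ^ 5 + 19/5283532800 * w ^ 6 + 1/42268262400 * w ^ 7) * s ^ 13 +
    (-1/870912000 * w ^ 6 - 1/48771072000 * w ^ 7) * s ^ 15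

lemma hasDerivAt_lowerPrim (w s : ℝ) :
    HasDerivAt (lowerPrim w) ((1 - s ^ 2) * hLo (w * s ^ 2) * dLo w (w * s ^ 2)) s := by
  have hp (n : ℕ) (c : ℝ) : HasDerivAt (fun t : ℝ => c * t ^ n) (c * (n * s ^ (n - 1))) s :=
    (hasDerivAt_pow n s).const_mul c
  have h : HasDerivAt (lowerPrim w) _ s :=
    (((((((hp 1 _).fun_add (hp 3 _)).fun_add (hp 5 _)).fun_add (hp 7 _)).fun_add
      (hp 9 _)).fun_add (hp 11 _)).fun_add (hp 13 _)).fun_add (hp 15 _)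
  refine h.congr_deriv ?_
  simp only [hLo, dLo]
  push_cast
  ring

/-- Antiderivative in `s`, vanishing at `0`, of `(1 - s²) · hHi(w s²) · dHi(w, w s²)`. -/
noncomputable def upperPrim (w s : ℝ) : ℝ :=
    (1/2 + 1/24 * w) * s ^ 1 +
    (-1/6 - 5/72 * w - 7/2160 * w ^ 2) * s ^ 3 +
    (1/30 * w + 23/3600 * w ^ 2 + 107/604800 * w ^ 3) * s ^ 5 +
    (-1/315 * w ^ 2 - 299/846720 * w ^ 3 - 163/25401600 * w ^ 4) * s ^ 7 +
    (1/5670 * w ^ 3 + 419/32659200 * w ^ 4 + 13/78382080 * w ^ 5) * s ^ 9 +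
    (-1/155925 * w ^ 4 - 31/95800320 * w ^ 5 - 29/9144576000 * w ^ 6) * s ^ 11 +
    (1/6289920 * w ^ 5 + 1373/237758976000 * w ^ 6 + 83/1902071808000 * w ^ 7) * s ^ 13 +
    (-1/373248000 * w ^ 6 - 13/182891520000 * w ^ 7 - 1/2469035520000 * w ^ 8) * s ^ 15 +
    (73/2487324672000 * w ^ 7 + 1/1790873763840 * w ^ 8 + 1/447718440960000 * w ^ 9) * s ^ 17 +
    (-1/5559902208000 * w ^ 8 - 1/500391198720000 * w ^ 9) * s ^ 19

lemma hasDerivAt_upperPrim (w s : ℝ) :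
    HasDerivAt (upperPrim w) ((1 - s ^ 2) * hHi (w * s ^ 2) * dHi w (w * s ^ 2)) s := by
  have hp (n : ℕ) (c : ℝ) : HasDerivAt (fun t : ℝ => c * t ^ n) (c * (n * s ^ (n - 1))) s :=
    (hasDerivAt_pow n s).const_mul c
  have h : HasDerivAt (upperPrim w) _ s :=
    (((((((((hp 1 _).fun_add (hp 3 _)).fun_add (hp 5 _)).fun_add (hp 7 _)).fun_add
      (hp 9 _)).fun_add (hp 11 _)).fun_add (hp 13 _)).fun_add (hp 15 _)).fun_add
      (hp 17 _)).fun_add (hp 19 _)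
  refine h.congr_deriv ?_
  simp only [hHi, dHi]
  push_cast
  ring

/-! ### Enclosure of the volume integrand -/

/-- Polynomial enclosures of the two factors of the integrand, for `x² ≤ 2.5`, which covers
`0 < x ≤ π / 2`. -/
lemma factor_bounds {w x : ℝ} (hw : 0 ≤ w) (hx : 0 < x) (hx2 : x ^ 2 ≤ 2.5) :
    hLo (x ^ 2) ≤ (1 - cos x) / x ^ 2 ∧ (1 - cos x) / x ^ 2 ≤ hHi (x ^ 2) ∧
    dLo w (x ^ 2) ≤ dFac w x ∧ dFac w x ≤ dHi w (x ^ 2) ∧ 0 ≤ dLo w (x ^ 2) := by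
  have c3 := (taylor_bounds 3 x hx.le).1
  have s3 := (taylor_bounds 3 x hx.le).2
  have c4 := (taylor_bounds 4 x hx.le).1
  have s4 := (taylor_bounds 4 x hx.le).2
  have c5 := (taylor_bounds 5 x hx.le).1
  norm_num [Finset.sum_range_succ, Nat.factorial] at c3 s3 c4 s4 c5
  have hx2' : 0 < x ^ 2 := by positivity
  have hx3 : 0 < x ^ 3 := by positivity
  refine ⟨?_, ?_, ?_, ?_, ?_⟩
  · rw [le_div_iff₀ hx2', hLo]
    linarith
  · rw [div_le_iff₀ hx2', hHi]
    linarith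
  · have hg : 1 / 12 - x ^ 2 / 80 + (x ^ 2) ^ 2 / 2016 - (x ^ 2) ^ 3 / 80640 ≤
        sin x / x ^ 3 - (1 + cos x) / (2 * x ^ 2) := by
      rw [show sin x / x ^ 3 - (1 + cos x) / (2 * x ^ 2) =
        (sin x - x * (1 + cos x) / 2) / x ^ 3 by field_simp, le_div_iff₀ hx3]
      have := mul_le_mul_of_nonneg_left c4 hx.le
      linarith
    have := mul_le_mul_of_nonneg_left hg hw
    rw [dLo, dFac]
    linarith
  · have hg : sin x / x ^ 3 - (1 + cos x) / (2 * x ^ 2) ≤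
        1 / 12 - x ^ 2 / 80 + (x ^ 2) ^ 2 / 2016 - (x ^ 2) ^ 3 / 103680 +
          (x ^ 2) ^ 4 / 7257600 := by
      rw [show sin x / x ^ 3 - (1 + cos x) / (2 * x ^ 2) =
        (sin x - x * (1 + cos x) / 2) / x ^ 3 by field_simp, div_le_iff₀ hx3]
      have := mul_le_mul_of_nonneg_left c5 hx.le
      linarith
    have := mul_le_mul_of_nonneg_left hg hw
    rw [dHi, dFac]
    linarith
  · rw [dLo]
    generalize x ^ 2 = y at *
    have h2 : y ^ 2 * y ≤ y ^ 2 * 2.5 := by gcongr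
    have h3 : 0 ≤ y ^ 2 := by positivity
    have h1 : 0 ≤ 1 - y / 4 + y ^ 2 / 48 - y ^ 3 / 1440 := by nlinarith
    have h4 : 0 ≤ 1 / 12 - y / 80 + y ^ 2 / 2016 - y ^ 3 / 80640 := by nlinarith
    positivity

/-- Closed form of the volume integrand for `r = π / 2` away from the endpoints. -/
noncomputable def integrand (θ : ℝ) : ℝ :=
  2 * (1 - sin θ ^ 2) * (π / 2) ^ 2 * ((1 - cos (π / 2 * sin θ)) / (π / 2 * sin θ) ^ 2) *
    (π / 2 * cos θ * dFac ((π / 2) ^ 2) (π / 2 * sin θ))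

lemma integrand_eq {θ : ℝ} (h0 : 0 < θ) (h1 : θ < π / 2) :
    nilX (π / 2) θ ^ 2 * deriv (fun t => nilZ (π / 2) t) θ = integrand θ := by
  have hs : 0 < sin θ := sin_pos_of_pos_of_lt_pi h0 (by linarith [pi_pos])
  have hpi := pi_pos
  have hX : nilX (π / 2) θ ^ 2 = 2 * (1 - sin θ ^ 2) * (π / 2) ^ 2 *
      ((1 - cos (π / 2 * sin θ)) / (π / 2 * sin θ) ^ 2) := by
    have hc : cos (π / 2 * sin θ) = 1 - 2 * sin (π / 2 * sin θ / 2) ^ 2 := by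
      rw [← cos_two_mul_eq_one_sub]
      congr 1
      ring
    rw [nilX, if_neg h0.ne', hc, mul_pow, div_pow, mul_pow, cos_sq']
    field_simp
    ring
  have hsd := hasDerivAt_sin θ
  have hcd := hasDerivAt_cos θ
  have hZ : HasDerivAt (fun t => nilZ (π / 2) t)
      (π / 2 * cos θ * dFac ((π / 2) ^ 2) (π / 2 * sin θ)) θ := by
    have hev : (fun t => nilZ (π / 2) t) =ᶠ[nhds θ] fun t =>
        π / 2 * sin t + π / 2 * cos t ^ 2 / (2 * sin t) -
          (cos t ^ 2 / (2 * sin t ^ 2)) * sin (π / 2 * sin t) := by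
      filter_upwards [lt_mem_nhds h0] with t ht
      rw [nilZ, if_neg ht.ne']
    refine HasDerivAt.congr_of_eventuallyEq ?_ hev
    have h1 := hsd.const_mul (π / 2)
    have h2 := ((hcd.fun_pow 2).const_mul (π / 2)).fun_div (hsd.const_mul 2) (by positivity)
    have h3 := (hcd.fun_pow 2).fun_div ((hsd.fun_pow 2).const_mul 2) (by positivity)
    refine ((h1.fun_add h2).fun_sub (h3.fun_mul h1.sin)).congr_deriv ?_
    have hc2 : cos θ ^ 2 = 1 - sin θ ^ 2 := cos_sq' θ
    rw [dFac]
    field_simp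
    push_cast
    linear_combination cos θ * (-π * sin θ ^ 2 + 4 * sin θ * sin (π * sin θ / 2) -
      π * sin θ ^ 2 * cos (π * sin θ / 2)) * hc2
  rw [hX, hZ.deriv, integrand]

lemma integrand_bounds {θ : ℝ} (h0 : 0 < θ) (h1 : θ < π / 2) :
    2 * (π / 2) ^ 3 * ((1 - sin θ ^ 2) * hLo ((π / 2) ^ 2 * sin θ ^ 2) *
      dLo ((π / 2) ^ 2) ((π / 2) ^ 2 * sin θ ^ 2) * cos θ) ≤ integrand θ ∧
    integrand θ ≤ 2 * (π / 2) ^ 3 * ((1 - sin θ ^ 2) * hHi ((π / 2) ^ 2 * sin θ ^ 2) *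
      dHi ((π / 2) ^ 2) ((π / 2) ^ 2 * sin θ ^ 2) * cos θ) := by
  have hs : 0 < sin θ := sin_pos_of_pos_of_lt_pi h0 (by linarith [pi_pos])
  have hc : 0 < cos θ := cos_pos_of_mem_Ioo ⟨by linarith, h1⟩
  have hpi := pi_pos
  have hx : 0 < π / 2 * sin θ := by positivity
  have hs1 : 0 ≤ 1 - sin θ ^ 2 := by rw [← cos_sq']; positivity
  have hx2 : (π / 2 * sin θ) ^ 2 ≤ 2.5 := by
    have : (π / 2) ^ 2 ≤ 2.5 := by nlinarith [pi_lt_d2]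
    rw [mul_pow]
    nlinarith [sq_nonneg (π / 2)]
  obtain ⟨b1, b2, b3, b4, b5⟩ := factor_bounds (sq_nonneg (π / 2)) hx hx2
  have hh : 0 ≤ (1 - cos (π / 2 * sin θ)) / (π / 2 * sin θ) ^ 2 :=
    div_nonneg (by linarith [cos_le_one (π / 2 * sin θ)]) (sq_nonneg _)
  have hlow := mul_le_mul b1 b3 b5 hh
  have hupp := mul_le_mul b2 b4 (b5.trans b3) (hh.trans b2)
  have hk : 0 ≤ 2 * (π / 2) ^ 3 * (1 - sin θ ^ 2) * cos θ := by positivity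
  have l1 := mul_le_mul_of_nonneg_left hlow hk
  have l2 := mul_le_mul_of_nonneg_left hupp hk
  rw [← mul_pow, integrand]
  constructor
  · refine le_of_eq_of_le ?_ (l1.trans_eq ?_) <;> ring
  · refine le_of_eq_of_le ?_ (l2.trans_eq ?_) <;> ring

/-! ### Integration and numerical evaluation -/

/-- The substitution `s = sin θ` turns the integral into `∫₀¹ p(s) ds`. -/
lemma integral_primitive {P p : ℝ → ℝ} (hP : ∀ s, HasDerivAt P (p s) s) (hp : Continuous p)
    (h0 : P 0 = 0) : ∫ θ in (0 : ℝ)..(π / 2), p (sin θ) * cos θ = P 1 := by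
  rw [intervalIntegral.integral_eq_sub_of_hasDerivAt (f := fun θ => P (sin θ))
    (fun θ _ => (hP (sin θ)).comp θ (hasDerivAt_sin θ))
    (by apply Continuous.intervalIntegrable; fun_prop)]
  simp [h0]

lemma measurable_integrand : Measurable integrand := by
  unfold integrand dFac
  fun_prop

/-- `V(π/2) / π²` lies between `2 w ∫₀¹ (1 - s²) hLo dLo ds` and its upper counterpart, with
`w = (π/2)²`. -/
lemma vol_bounds :
    2 * (π / 2) ^ 2 * lowerPrim ((π / 2) ^ 2) 1 ≤ nilBallVol (π / 2) / π ^ 2 ∧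
    nilBallVol (π / 2) / π ^ 2 ≤ 2 * (π / 2) ^ 2 * upperPrim ((π / 2) ^ 2) 1 := by
  have hpi := pi_pos
  have hcl : Continuous fun s : ℝ => (1 - s ^ 2) * hLo ((π / 2) ^ 2 * s ^ 2) *
      dLo ((π / 2) ^ 2) ((π / 2) ^ 2 * s ^ 2) := by
    unfold hLo dLo
    fun_prop
  have hcu : Continuous fun s : ℝ => (1 - s ^ 2) * hHi ((π / 2) ^ 2 * s ^ 2) *
      dHi ((π / 2) ^ 2) ((π / 2) ^ 2 * s ^ 2) := by
    unfold hHi dHi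
    fun_prop
  have il := integral_primitive (hasDerivAt_lowerPrim ((π / 2) ^ 2)) hcl (by simp [lowerPrim])
  have iu := integral_primitive (hasDerivAt_upperPrim ((π / 2) ^ 2)) hcu (by simp [upperPrim])
  have intl := ((hcl.comp continuous_sin).mul continuous_cos).const_mul (2 * (π / 2) ^ 3)
    |>.intervalIntegrable (μ := MeasureTheory.volume) 0 (π / 2)
  have intu := ((hcu.comp continuous_sin).mul continuous_cos).const_mul (2 * (π / 2) ^ 3)
    |>.intervalIntegrable (μ := MeasureTheory.volume) 0 (π / 2)
  have hle : (0 : ℝ) ≤ π / 2 := by positivity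
  -- `integrand` is written with divisions by `sin θ`, so continuity at `0` is not available;
  -- measurability and the two continuous bounds suffice.
  have inti : IntervalIntegrable integrand MeasureTheory.volume 0 (π / 2) := by
    rw [intervalIntegrable_iff_integrableOn_Ioo_of_le hle] at intl intu ⊢
    refine MeasureTheory.integrable_of_le_of_le measurable_integrand.aestronglyMeasurable
      ?_ ?_ intl intu
    · filter_upwards [MeasureTheory.ae_restrict_mem measurableSet_Ioo] with θ hθ
      exact (integrand_bounds hθ.1 hθ.2).1
    · filter_upwards [MeasureTheory.ae_restrict_mem measurableSet_Ioo] with θ hθ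
      exact (integrand_bounds hθ.1 hθ.2).2
  have hl := intervalIntegral.integral_mono_on_of_le_Ioo hle intl inti
    fun θ hθ => (integrand_bounds hθ.1 hθ.2).1
  have hu := intervalIntegral.integral_mono_on_of_le_Ioo hle inti intu
    fun θ hθ => (integrand_bounds hθ.1 hθ.2).2
  simp only [Function.comp_apply, Pi.mul_apply, intervalIntegral.integral_const_mul] at hl hu
  rw [il] at hl
  rw [iu] at hu
  have hV : nilBallVol (π / 2) = 2 * π * ∫ θ in (0 : ℝ)..(π / 2), integrand θ := by
    -- The conventional values of `nilX` and `nilZ` at `θ = 0` do not matter for the integral.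
    rw [nilBallVol, intervalIntegral.integral_of_le hle, intervalIntegral.integral_of_le hle,
      MeasureTheory.integral_Ioc_eq_integral_Ioo, MeasureTheory.integral_Ioc_eq_integral_Ioo]
    congr 1
    exact MeasureTheory.setIntegral_congr_fun measurableSet_Ioo
      fun θ hθ => integrand_eq hθ.1 hθ.2
  rw [hV, le_div_iff₀ (by positivity), div_le_iff₀ (by positivity)]
  have h2 : 0 ≤ 2 * π := by positivity
  have l1 := mul_le_mul_of_nonneg_left hl h2
  have l2 := mul_le_mul_of_nonneg_left hu h2
  constructor
  · linarith
  · linarith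

/-- `V(π/2)/(2·(π/2))² ≈ 1.71179510`: numerical bounds for the minimum of the
density lower-bound function `f(R) = V(R)/(2R)²` on `[π/2, π]`. -/
theorem nil_density_bound_at_pi_div_two :
    1.7117 < nilBallVol (π / 2) / π ^ 2 ∧ nilBallVol (π / 2) / π ^ 2 < 1.7118 := by
  obtain ⟨hl, hu⟩ := vol_bounds
  have w1 : 2.46740110 ≤ (π / 2) ^ 2 := by nlinarith [pi_gt_d20]
  have w2 : (π / 2) ^ 2 ≤ 2.46740111 := by nlinarith [pi_lt_d20, pi_pos]
  rw [lowerPrim] at hl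
  rw [upperPrim] at hu
  generalize (π / 2) ^ 2 = w at *
  -- The claim is linear in the powers of `w`, which are enclosed one by one.
  have lo (n : ℕ) : 2.46740110 ^ n ≤ w ^ n := pow_le_pow_left₀ (by norm_num) w1 n
  have hi (n : ℕ) : w ^ n ≤ 2.46740111 ^ n := pow_le_pow_left₀ (by linarith) w2 n
  have l2 := lo 2
  have l3 := lo 3
  have l4 := lo 4
  have l5 := lo 5
  have l6 := lo 6
  have l7 := lo 7
  have l8 := lo 8
  have l9 := lo 9
  have l10 := lo 10
  have u2 := hi 2
  have u3 := hi 3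
  have u4 := hi 4
  have u5 := hi 5
  have u6 := hi 6
  have u7 := hi 7
  have u8 := hi 8
  have u9 := hi 9
  have u10 := hi 10
  norm_num at l2 l3 l4 l5 l6 l7 l8 l9 l10 u2 u3 u4 u5 u6 u7 u8 u9 u10
  constructor
  · linarith
  · linarith
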